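/- There is a universal constant c > 0 such that for every n ≥ 1, every ε > 0, and every f : {0,1}^n → {0,1} that is ε-far from monotone, (1/2^n)·Σ_{x ∈ {0,1}^n} √(I_f⁻(x)) ≥ c·ε. -/

import Mathlib

open Finset

attribute [local instance] Classical.propDecidable

variable {n : ℕ}

/-- The edge of the hypercube along dimension `i` at `x` (the pair
`{x^{(i→0)}, x^{(i→1)}}`) is decreasing for `f`. -/
def decEdge (f : (Fin n → Bool) → Bool) (x : Fin n → Bool) (i : Fin n) : Prop :=
  f (Function.update x i false) = true ∧ f (Function.update x i true) = false

/-- `x` with its `i`-th coordinate flipped. -/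
def flipC (x : Fin n → Bool) (i : Fin n) : Fin n → Bool := Function.update x i (!(x i))

/-- `g` is monotone. -/
def monoB (g : (Fin n → Bool) → Bool) : Prop :=
  ∀ x y : Fin n → Bool, (∀ i, x i ≤ y i) → g x ≤ g y

/-- Distance of `f` to the set of monotone functions. -/
noncomputable def distMono (f : (Fin n → Bool) → Bool) : ℝ :=
  sInf {d : ℝ | ∃ g : (Fin n → Bool) → Bool, monoB g ∧
    d = ((univ.filter fun x => f x ≠ g x).card : ℝ) / 2 ^ n}

/-- `I_f⁻(x)`: the number of decreasing edges of `f` incident on `x`. -/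
noncomputable def Iminus (f : (Fin n → Bool) → Bool) (x : Fin n → Bool) : ℕ :=
  (univ.filter fun i => decEdge f x i).card

/-- The number of decreasing edges of `f` (each edge represented by its lower
endpoint together with its dimension). -/
noncomputable def numDecEdges (f : (Fin n → Bool) → Bool) : ℕ :=
  (univ.filter fun q : (Fin n → Bool) × Fin n => q.1 q.2 = false ∧ decEdge f q.1 q.2).card

/-- The event Capture(x, S, f). -/
def Capture (f : (Fin n → Bool) → Bool) (S : Finset (Fin n)) (x : Fin n → Bool) : Prop :=
  ∃ i ∈ S, decEdge f x i ∧ ∀ j ∈ S \ {i}, ¬ decEdge f (flipC x i) j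

/-- Hamming weight of `x` restricted to the coordinates in `M`. -/
noncomputable def wt (M : Finset (Fin n)) (x : Fin n → Bool) : ℕ :=
  (M.filter fun i => x i = true).card

/-- `g` is unate. -/
def unate (g : (Fin n → Bool) → Bool) : Prop :=
  ∃ σ : Fin n → Bool, monoB (fun x => g (fun i => xor (x i) (σ i)))

/-- Distance of `f` to the set of unate functions. -/
noncomputable def distUnate (f : (Fin n → Bool) → Bool) : ℝ :=
  sInf {d : ℝ | ∃ g : (Fin n → Bool) → Bool, unate g ∧
    d = ((univ.filter fun x => f x ≠ g x).card : ℝ) / 2 ^ n}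

/-- `g` is a `k`-junta. -/
def isJunta (k : ℕ) (g : (Fin n → Bool) → Bool) : Prop :=
  ∃ J : Finset (Fin n), J.card ≤ k ∧
    ∀ x y : Fin n → Bool, (∀ i ∈ J, x i = y i) → g x = g y

/-- Distance of `f` to the set of `k`-juntas. -/
noncomputable def distJunta (k : ℕ) (f : (Fin n → Bool) → Bool) : ℝ :=
  sInf {d : ℝ | ∃ g : (Fin n → Bool) → Bool, isJunta k g ∧
    d = ((univ.filter fun x => f x ≠ g x).card : ℝ) / 2 ^ n}

/-- `I⁻_{f,red}(x)` for the coloring `col` (an edge is identified by its lower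
endpoint along its dimension; `col e i = true` means the edge along dimension `i`
at `e` is red). -/
noncomputable def IredCol (f : (Fin n → Bool) → Bool)
    (col : (Fin n → Bool) → Fin n → Bool) (x : Fin n → Bool) : ℕ :=
  if f x = true then
    (univ.filter fun i => decEdge f x i ∧ col (Function.update x i false) i = true).card
  else 0

/-- `I⁻_{f,blue}(x)` for the coloring `col`. -/
noncomputable def IblueCol (f : (Fin n → Bool) → Bool)
    (col : (Fin n → Bool) → Fin n → Bool) (x : Fin n → Bool) : ℕ :=
  if f x = false then
    (univ.filter fun i => decEdge f x i ∧ col (Function.update x i false) i = false).card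
  else 0

/-- `Ψ_M`: the middle layer of the subcube `{0,1}^M`. -/
noncomputable def PsiSet (M : Finset (Fin n)) : Finset (↥M → Bool) :=
  univ.filter fun z => (univ.filter fun i : ↥M => z i = true).card = n / 4

/-- `x` is an erased point (for parameter `κ` and control set `M`). -/
def ErasedPt (κ : ℝ) (M : Finset (Fin n)) (x : Fin n → Bool) : Prop :=
  wt M x = n / 4 ∧ |(wt Mᶜ x : ℝ) - (n : ℝ) / 4| ≤ (n : ℝ) ^ κ

/-- `Maj(x_{M̄})`: majority on the coordinates outside `M`. -/
noncomputable def MajBar (M : Finset (Fin n)) (x : Fin n → Bool) : Bool :=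
  decide (n / 4 < wt Mᶜ x)

/-- `F` is a completion of the `D⁻` instance determined by `(M, P)`. -/
def DminusCompletion (κ : ℝ) (M : Finset (Fin n)) (P : Finset (↥M → Bool))
    (F : (Fin n → Bool) → Bool) : Prop :=
  (∀ x, wt M x < n / 4 → F x = false) ∧
  (∀ x, n / 4 < wt M x → F x = true) ∧
  (∀ x, wt M x = n / 4 → ¬ ErasedPt κ M x →
    F x = if (fun i : ↥M => x i.1) ∈ P then MajBar M x else !(MajBar M x))

/-- The function `F` of Statement 12: `F(x) = 1` iff `|x_M| > n/4`, or
`|x_M| = n/4` and `x_M ∉ P`. -/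
noncomputable def DplusF (M : Finset (Fin n)) (P : Finset (↥M → Bool))
    (x : Fin n → Bool) : Bool :=
  if n / 4 < wt M x then true
  else if wt M x = n / 4 ∧ (fun i : ↥M => x i.1) ∉ P then true
  else false


/-! ### Expectation over words -/

/-- expectation of `G` over uniform words of length `N` -/
noncomputable def Ex (α : Type) [Fintype α] : ℕ → (List α → ℝ) → ℝ
  | 0, G => G []
  | N + 1, G => (∑ a : α, Ex α N (fun l => G (a :: l))) / (Fintype.card α : ℝ)

section ExLemmas
variable {α β : Type} [Fintype α] [Fintype β]

lemma Ex_mono (N : ℕ) : ∀ (G H : List α → ℝ), (∀ l, l.length = N → G l ≤ H l) →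
    Ex α N G ≤ Ex α N H := by
  induction N with
  | zero => intro G H h; exact h [] rfl
  | succ N ih =>
    intro G H h
    simp only [Ex]
    gcongr with a
    exact ih _ _ (fun l hl => h _ (by simp [hl]))

lemma Ex_congr (N : ℕ) (G H : List α → ℝ) (h : ∀ l, l.length = N → G l = H l) :
    Ex α N G = Ex α N H :=
  le_antisymm (Ex_mono N _ _ fun l hl => (h l hl).le) (Ex_mono N _ _ fun l hl => (h l hl).ge)

lemma Ex_add (N : ℕ) : ∀ (G H : List α → ℝ),
    Ex α N (fun l => G l + H l) = Ex α N G + Ex α N H := by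
  induction N with
  | zero => intro G H; rfl
  | succ N ih => intro G H; simp only [Ex, ih, Finset.sum_add_distrib, add_div]

lemma Ex_mul (N : ℕ) (c : ℝ) : ∀ (G : List α → ℝ),
    Ex α N (fun l => c * G l) = c * Ex α N G := by
  induction N with
  | zero => intro G; rfl
  | succ N ih => intro G; simp only [Ex, ih, ← Finset.mul_sum, mul_div_assoc]

lemma Ex_const [Nonempty α] (N : ℕ) (c : ℝ) : Ex α N (fun _ => c) = c := by
  induction N with
  | zero => rfl
  | succ N ih =>
    have : (Fintype.card α : ℝ) ≠ 0 := by exact_mod_cast Fintype.card_ne_zero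
    simp only [Ex, ih, Finset.sum_const, Finset.card_univ, nsmul_eq_mul]
    field_simp

lemma Ex_zero (N : ℕ) : Ex α N (fun _ => (0 : ℝ)) = 0 := by
  have := Ex_mul (α := α) N 0 (fun _ => 0)
  simpa using this

lemma Ex_sum {γ : Type} (s : Finset γ) (N : ℕ) (G : γ → List α → ℝ) :
    Ex α N (fun l => ∑ c ∈ s, G c l) = ∑ c ∈ s, Ex α N (G c) := by
  classical
  induction s using Finset.induction_on with
  | empty => simp [Ex_zero]
  | insert a s ha ih => simp only [Finset.sum_insert ha, Ex_add, ih]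

lemma Ex_comm (M : ℕ) (N : ℕ) : ∀ (G : List α → List β → ℝ),
    Ex α M (fun a => Ex β N (fun b => G a b)) = Ex β N (fun b => Ex α M (fun a => G a b)) := by
  induction M with
  | zero => intro G; rfl
  | succ M ih =>
    intro G
    simp only [Ex, ih]
    rw [← Ex_sum, div_eq_inv_mul, ← Ex_mul]
    simp only [div_eq_inv_mul]

lemma Ex_nonneg (N : ℕ) (G : List α → ℝ) (h : ∀ l, 0 ≤ G l) : 0 ≤ Ex α N G := by
  have := Ex_mono N (fun _ => 0) G (fun l _ => h l)
  rwa [Ex_zero] at this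

lemma Ex_append (M N : ℕ) : ∀ (G : List α → ℝ),
    Ex α (M + N) G = Ex α M (fun u => Ex α N (fun v => G (u ++ v))) := by
  induction M with
  | zero => intro G; simp [Ex]
  | succ M ih =>
    intro G
    rw [show M + 1 + N = (M + N) + 1 by omega]
    simp only [Ex, ih, List.cons_append]

/-- Jensen -/
lemma Ex_sqrt [Nonempty α] (N : ℕ) (G : List α → ℝ) (h : ∀ l, 0 ≤ G l) :
    Ex α N (fun l => Real.sqrt (G l)) ≤ Real.sqrt (Ex α N G) := by
  apply Real.le_sqrt_of_sq_le
  set m := Ex α N (fun l => Real.sqrt (G l)) with hm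
  have h1 : Ex α N (fun l => 2 * m * Real.sqrt (G l)) ≤ Ex α N (fun l => G l + m ^ 2) := by
    apply Ex_mono
    intro l _
    nlinarith [Real.sq_sqrt (h l), sq_nonneg (Real.sqrt (G l) - m)]
  rw [Ex_mul, Ex_add, Ex_const, ← hm] at h1
  nlinarith

/-- Minkowski -/
lemma Ex_mink (N : ℕ) (A B : List α → ℝ) :
    Real.sqrt ((Ex α N A) ^ 2 + (Ex α N B) ^ 2) ≤
      Ex α N (fun l => Real.sqrt (A l ^ 2 + B l ^ 2)) := by
  set a := Ex α N A with ha
  set b := Ex α N B with hb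
  set r := Real.sqrt (a ^ 2 + b ^ 2) with hr
  have hr2 : r ^ 2 = a ^ 2 + b ^ 2 := Real.sq_sqrt (by positivity)
  have hr0 : 0 ≤ r := Real.sqrt_nonneg _
  have h1 : Ex α N (fun l => a * A l + b * B l) ≤
      Ex α N (fun l => r * Real.sqrt (A l ^ 2 + B l ^ 2)) := by
    apply Ex_mono
    intro l _
    rw [hr, ← Real.sqrt_mul (by positivity)]
    apply Real.le_sqrt_of_sq_le
    nlinarith [sq_nonneg (a * B l - b * A l)]
  rw [Ex_add, Ex_mul, Ex_mul, Ex_mul, ← ha, ← hb] at h1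
  rcases hr0.eq_or_lt with h | h
  · rw [← h]; exact Ex_nonneg _ _ (fun l => Real.sqrt_nonneg _)
  · nlinarith

end ExLemmas

/-! ### Talagrand's inequality on the cube -/

/-- indicator of `a ≠ b` -/
def nq : Bool → Bool → ℝ
  | true, true => 0
  | true, false => 1
  | false, true => 1
  | false, false => 0

/-- real value of a Boolean -/
def br : Bool → ℝ
  | true => 1
  | false => 0

lemma nq_nonneg (a b : Bool) : 0 ≤ nq a b := by cases a <;> cases b <;> simp [nq]
lemma nq_self (a : Bool) : nq a a = 0 := by cases a <;> simp [nq]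
lemma nq_comm (a b : Bool) : nq a b = nq b a := by cases a <;> cases b <;> simp [nq]
lemma nq_tri (a b c : Bool) : nq a c ≤ nq a b + nq b c := by
  cases a <;> cases b <;> cases c <;> simp [nq]

/-- sensitivity -/
def sens : List Bool → (List Bool → Bool) → ℝ
  | [], _ => 0
  | b :: s, φ => nq (φ (true :: s)) (φ (false :: s)) + sens s (fun t => φ (b :: t))

lemma sens_nonneg : ∀ (s : List Bool) (φ : List Bool → Bool), 0 ≤ sens s φ
  | [], _ => le_refl _
  | _ :: s, _ => add_nonneg (nq_nonneg _ _) (sens_nonneg s _)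

lemma sens_const (c : Bool) : ∀ (s : List Bool), sens s (fun _ => c) = 0
  | [] => rfl
  | b :: s => by simp [sens, nq_self, sens_const c s]

lemma two_point (a b : ℝ) :
    ((a + b) / 2) * (1 - (a + b) / 2) ≤
      (Real.sqrt ((a * (1 - a)) ^ 2 + (a - b) ^ 2 / 8) +
        Real.sqrt ((b * (1 - b)) ^ 2 + (a - b) ^ 2 / 8)) / 2 := by
  set p := a * (1 - a) with hp
  set q := b * (1 - b) with hq
  set k := (a - b) ^ 2 / 8 with hk
  have hk0 : 0 ≤ k := by positivity
  set X := Real.sqrt (p ^ 2 + k) with hX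
  set Y := Real.sqrt (q ^ 2 + k) with hY
  have hX2 : X ^ 2 = p ^ 2 + k := Real.sq_sqrt (by positivity)
  have hY2 : Y ^ 2 = q ^ 2 + k := Real.sq_sqrt (by positivity)
  have hXY : p * q + k ≤ X * Y := by
    rw [hX, hY, ← Real.sqrt_mul (by positivity)]
    apply Real.le_sqrt_of_sq_le
    nlinarith [mul_nonneg hk0 (sq_nonneg (p - q))]
  have hX0 : 0 ≤ X := Real.sqrt_nonneg _
  have hY0 : 0 ≤ Y := Real.sqrt_nonneg _
  set v := ((a + b) / 2) * (1 - (a + b) / 2) with hv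
  set t := (a - b) / 2 with ht
  have hpq : p + q = 2 * (v - t ^ 2) := by rw [hp, hq, hv, ht]; ring
  have hkt : k = t ^ 2 / 2 := by rw [hk, ht]; ring
  have hv4 : v ≤ 1 / 4 := by rw [hv]; nlinarith [sq_nonneg ((a + b) / 2 - 1 / 2)]
  have h1 : (2 * v) ^ 2 ≤ (X + Y) ^ 2 := by
    have e1 : (X + Y) ^ 2 ≥ (p + q) ^ 2 + 4 * k := by nlinarith
    rw [hpq, hkt] at e1
    nlinarith [mul_nonneg (sq_nonneg t) (by linarith : 0 ≤ 1 / 4 - v), sq_nonneg (t ^ 2)]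
  have := abs_le_of_sq_le_sq h1 (by linarith)
  linarith [le_abs_self (2 * v)]

lemma talagrand (N : ℕ) : ∀ φ : List Bool → Bool,
    Ex Bool N (fun s => br (φ s)) * (1 - Ex Bool N (fun s => br (φ s))) ≤
      Ex Bool N (fun s => Real.sqrt (sens s φ / 8)) := by
  induction N with
  | zero => intro φ; cases h : φ [] <;> simp [Ex, sens, br, h]
  | succ N ih =>
    intro φ
    have key : ∀ b : Bool, ∀ (d : ℝ), |d| ≤ Ex Bool N (fun s => nq (φ (true :: s)) (φ (false :: s))) →
        Real.sqrt ((Ex Bool N (fun s => br (φ (b :: s))) *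
          (1 - Ex Bool N (fun s => br (φ (b :: s))))) ^ 2 + d ^ 2 / 8) ≤
        Ex Bool N (fun s => Real.sqrt (sens (b :: s) φ / 8)) := by
      intro b d hd
      have h1 := ih (fun s => φ (b :: s))
      have h0 : 0 ≤ Ex Bool N (fun s => br (φ (b :: s))) :=
        Ex_nonneg _ _ (fun l => by cases φ (b :: l) <;> simp [br])
      have h2 : Ex Bool N (fun s => br (φ (b :: s))) ≤ 1 := by
        have := Ex_mono N (fun s => br (φ (b :: s))) (fun _ => 1)
          (fun l _ => by cases φ (b :: l) <;> simp [br])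
        rwa [Ex_const] at this
      have h3 := Ex_mink N (fun s => Real.sqrt (sens s (fun t => φ (b :: t)) / 8))
        (fun s => Real.sqrt (1 / 8) * nq (φ (true :: s)) (φ (false :: s)))
      rw [Ex_mul] at h3
      refine le_trans (Real.sqrt_le_sqrt ?_) (h3.trans (le_of_eq ?_))
      · have e0 : Real.sqrt (1 / 8) ^ 2 = 1 / 8 := Real.sq_sqrt (by norm_num)
        rw [mul_pow (Real.sqrt (1 / 8)), e0]
        have e1 : d ^ 2 ≤ (Ex Bool N (fun s => nq (φ (true :: s)) (φ (false :: s)))) ^ 2 := by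
          rw [← sq_abs d]; gcongr
        have e2 := pow_le_pow_left₀ (mul_nonneg h0 (by linarith)) h1 2
        linarith
      · apply Ex_congr
        intro s _
        congr 1
        have e0 : Real.sqrt (1 / 8) ^ 2 = 1 / 8 := Real.sq_sqrt (by norm_num)
        rw [mul_pow, e0,
          Real.sq_sqrt (div_nonneg (sens_nonneg _ _) (by norm_num))]
        have : nq (φ (true :: s)) (φ (false :: s)) ^ 2 = nq (φ (true :: s)) (φ (false :: s)) := by
          cases φ (true :: s) <;> cases φ (false :: s) <;> simp [nq]
        rw [this, sens]; ring
    simp only [Ex, Fintype.sum_bool, Fintype.card_bool]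
    set a := Ex Bool N (fun s => br (φ (true :: s))) with ha
    set b := Ex Bool N (fun s => br (φ (false :: s))) with hb
    have hab : |a - b| ≤ Ex Bool N (fun s => nq (φ (true :: s)) (φ (false :: s))) := by
      have e1 : a ≤ b + Ex Bool N (fun s => nq (φ (true :: s)) (φ (false :: s))) := by
        rw [ha, hb, ← Ex_add]
        apply Ex_mono
        intro l _
        cases φ (true :: l) <;> cases φ (false :: l) <;> simp [nq, br]
      have e2 : b ≤ a + Ex Bool N (fun s => nq (φ (true :: s)) (φ (false :: s))) := by
        rw [ha, hb, ← Ex_add]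
        apply Ex_mono
        intro l _
        cases φ (true :: l) <;> cases φ (false :: l) <;> simp [nq, br]
      rw [abs_le]; constructor <;> linarith
    have k1 := key true (a - b) hab
    have k2 := key false (a - b) hab
    have k3 := two_point a b
    push_cast
    rw [← ha] at k1
    rw [← hb] at k2
    linarith

lemma Ex_not (N : ℕ) : ∀ G : List Bool → ℝ,
    Ex Bool N (fun s => G (s.map not)) = Ex Bool N G := by
  induction N with
  | zero => intro G; rfl
  | succ N ih =>
    intro G
    simp only [Ex, Fintype.sum_bool, List.map_cons, Bool.not_true, Bool.not_false]
    rw [ih (fun s => G (false :: s)), ih (fun s => G (true :: s)), add_comm]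

lemma flip_bound (N : ℕ) (φ : List Bool → Bool) :
    Ex Bool N (fun s => nq (φ s) (φ (s.map not))) ≤
      2 * Ex Bool N (fun s => Real.sqrt (sens s φ)) := by
  have ht := talagrand N φ
  set m := Ex Bool N (fun s => br (φ s)) with hm
  have hm' : Ex Bool N (fun s => br (φ (s.map not))) = m := Ex_not N (fun s => br (φ s))
  have hm0 : 0 ≤ m := Ex_nonneg _ _ (fun l => by cases φ l <;> simp [br])
  have h1 : Ex Bool N (fun s => nq (φ s) (φ (s.map not))) ≤ 2 * m := by
    have := Ex_mono N (fun s => nq (φ s) (φ (s.map not)))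
      (fun s => br (φ s) + br (φ (s.map not)))
      (fun s _ => by cases φ s <;> cases φ (s.map not) <;> simp [nq, br])
    rw [Ex_add, hm', ← hm] at this
    linarith
  have h2 : Ex Bool N (fun s => nq (φ s) (φ (s.map not))) ≤ 2 * (1 - m) := by
    have := Ex_mono N (fun s => nq (φ s) (φ (s.map not)) + (br (φ s) + br (φ (s.map not))))
      (fun s => 2)
      (fun s _ => by cases φ s <;> cases φ (s.map not) <;> norm_num [nq, br])
    rw [Ex_add, Ex_add, hm', ← hm, Ex_const] at this
    linarith
  have hE : 0 ≤ Ex Bool N (fun s => nq (φ s) (φ (s.map not))) :=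
    Ex_nonneg _ _ (fun l => nq_nonneg _ _)
  have h3 : Ex Bool N (fun s => nq (φ s) (φ (s.map not))) ≤ 4 * (m * (1 - m)) := by
    rcases le_total m (1 / 2) with h | h <;> nlinarith
  have h4 : Ex Bool N (fun s => Real.sqrt (sens s φ / 8)) ≤
      (1 / 2) * Ex Bool N (fun s => Real.sqrt (sens s φ)) := by
    rw [← Ex_mul]
    apply Ex_mono
    intro s _
    have := sens_nonneg s φ
    rw [show (1 / 2 : ℝ) = Real.sqrt (1 / 4) by
      rw [show (1 / 4 : ℝ) = (1 / 2) ^ 2 by norm_num, Real.sqrt_sq (by norm_num)],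
      ← Real.sqrt_mul (by norm_num)]
    apply Real.sqrt_le_sqrt
    linarith
  linarith

/-! ### Sorting -/

/-- sort `f` along coordinate `i` -/
def srt (i : Fin n) (f : (Fin n → Bool) → Bool) (x : Fin n → Bool) : Bool :=
  bif x i then f (Function.update x i false) || f (Function.update x i true)
  else f (Function.update x i false) && f (Function.update x i true)

lemma srt_false (i : Fin n) (f : (Fin n → Bool) → Bool) (x : Fin n → Bool) :
    srt i f (Function.update x i false) =
      (f (Function.update x i false) && f (Function.update x i true)) := by
  simp [srt]

lemma srt_true (i : Fin n) (f : (Fin n → Bool) → Bool) (x : Fin n → Bool) :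
    srt i f (Function.update x i true) =
      (f (Function.update x i false) || f (Function.update x i true)) := by
  simp [srt]

lemma upd_cases (i : Fin n) (x : Fin n → Bool) :
    x = Function.update x i false ∨ x = Function.update x i true := by
  cases h : x i
  · left; rw [← h]; simp
  · right; rw [← h]; simp

lemma sum_pair (i : Fin n) (F : (Fin n → Bool) → ℝ) :
    ∑ x, (F (Function.update x i false) + F (Function.update x i true)) = 2 * ∑ x, F x := by
  have h1 : ∑ x, F (flipC x i) = ∑ x, F x := by
    apply Finset.sum_nbij' (fun x => flipC x i) (fun x => flipC x i)
    all_goals simp [flipC]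
  rw [two_mul]
  nth_rewrite 2 [← h1]
  rw [← Finset.sum_add_distrib]
  apply Finset.sum_congr rfl
  intro x _
  cases h : x i
  · have e : Function.update x i false = x := by rw [← h]; simp
    simp [flipC, h, e]
  · have e : Function.update x i true = x := by rw [← h]; simp
    simp [flipC, h, e, add_comm]

lemma pair_le (i : Fin n) (F G : (Fin n → Bool) → ℝ)
    (h : ∀ x, F (Function.update x i false) + F (Function.update x i true) ≤
      G (Function.update x i false) + G (Function.update x i true)) :
    ∑ x, F x ≤ ∑ x, G x := by
  have h1 := sum_pair i F
  have h2 := sum_pair i G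
  have h3 := Finset.sum_le_sum (fun x (_ : x ∈ (univ : Finset (Fin n → Bool))) => h x)
  linarith

/-- violation indicator -/
def vi (i : Fin n) (f : (Fin n → Bool) → Bool) (x : Fin n → Bool) : ℝ := nq (srt i f x) (f x)

lemma vi_nonneg (i : Fin n) (f : (Fin n → Bool) → Bool) (x : Fin n → Bool) : 0 ≤ vi i f x :=
  nq_nonneg _ _

lemma srt_srt (i : Fin n) (f : (Fin n → Bool) → Bool) : srt i (srt i f) = srt i f := by
  funext x
  rcases upd_cases i x with h | h <;> rw [h] <;> simp only [srt_false, srt_true] <;>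
    cases f (Function.update x i false) <;> cases f (Function.update x i true) <;> rfl

lemma vi_srt_le (i j : Fin n) (G : (Fin n → Bool) → Bool) (x : Fin n → Bool) :
    vi j (srt i G) x ≤ nq (srt i (srt j G) x) (srt i G x) := by
  by_cases hij : i = j
  · subst hij
    simp [vi, srt_srt, nq_self]
  · have hji : j ≠ i := fun h => hij h.symm
    obtain ⟨y, c, rfl⟩ : ∃ y c, x = Function.update y j c := by
      rcases upd_cases j x with h | h
      · exact ⟨_, _, h⟩
      · exact ⟨_, _, h⟩
    obtain ⟨z, d, hz⟩ : ∃ z d, Function.update y j c = Function.update (Function.update z j c) i d := by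
      rcases upd_cases i (Function.update y j c) with h | h
      · exact ⟨_, _, h⟩
      · exact ⟨_, _, h⟩
    rw [hz]
    unfold vi srt
    simp only [Function.update_of_ne hij, Function.update_of_ne hji, Function.update_comm hij,
      Function.update_idem, Function.update_self]
    cases c <;> cases d <;> simp only [cond_true, cond_false] <;>
    generalize G (Function.update (Function.update z j false) i false) = p <;>
    generalize G (Function.update (Function.update z j false) i true) = q <;>
    generalize G (Function.update (Function.update z j true) i false) = r <;>
    generalize G (Function.update (Function.update z j true) i true) = t <;>
    cases p <;> cases q <;> cases r <;> cases t <;> norm_num [nq]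

/-- number of functions in `L` that differ from `G` at `x` -/
def cnt (L : List ((Fin n → Bool) → Bool)) (G : (Fin n → Bool) → Bool) (x : Fin n → Bool) : ℝ :=
  (L.map (fun H => nq (H x) (G x))).sum

lemma cnt_nil (G : (Fin n → Bool) → Bool) (x : Fin n → Bool) : cnt [] G x = 0 := rfl

lemma cnt_cons (H : (Fin n → Bool) → Bool) (L : List ((Fin n → Bool) → Bool))
    (G : (Fin n → Bool) → Bool) (x : Fin n → Bool) :
    cnt (H :: L) G x = nq (H x) (G x) + cnt L G x := by simp [cnt]

lemma cnt_append (L M : List ((Fin n → Bool) → Bool))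
    (G : (Fin n → Bool) → Bool) (x : Fin n → Bool) :
    cnt (L ++ M) G x = cnt L G x + cnt M G x := by simp [cnt]

lemma cnt_nonneg (L : List ((Fin n → Bool) → Bool))
    (G : (Fin n → Bool) → Bool) (x : Fin n → Bool) : 0 ≤ cnt L G x := by
  induction L with
  | nil => simp [cnt]
  | cons H L ih => rw [cnt_cons]; linarith [nq_nonneg (H x) (G x)]

/-- concavity of the square root, as a rearrangement inequality -/
lemma sqrt_conc (a b c d : ℝ) (hd : 0 ≤ d) (hs : c + d = a + b) (h1 : d ≤ a) (h2 : d ≤ b) :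
    Real.sqrt c + Real.sqrt d ≤ Real.sqrt a + Real.sqrt b := by
  have ha : 0 ≤ a := hd.trans h1
  have hb : 0 ≤ b := hd.trans h2
  have hc : 0 ≤ c := by linarith
  have hp : Real.sqrt c * Real.sqrt d ≤ Real.sqrt a * Real.sqrt b := by
    rw [← Real.sqrt_mul hc, ← Real.sqrt_mul ha]
    apply Real.sqrt_le_sqrt
    have : c = a + b - d := by linarith
    subst this
    nlinarith [mul_nonneg (sub_nonneg.2 h1) (sub_nonneg.2 h2)]
  have h : (Real.sqrt c + Real.sqrt d) ^ 2 ≤ (Real.sqrt a + Real.sqrt b) ^ 2 := by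
    nlinarith [Real.sq_sqrt ha, Real.sq_sqrt hb, Real.sq_sqrt hc, Real.sq_sqrt hd]
  exact (le_abs_self _).trans (abs_le_of_sq_le_sq h (by positivity))

lemma one_step (i : Fin n) (e : ℝ) (L : List ((Fin n → Bool) → Bool))
    (G : (Fin n → Bool) → Bool) :
    ∑ x, Real.sqrt (e * vi i G x + cnt (L.map (srt i)) (srt i G) x) ≤
      ∑ x, Real.sqrt (e * vi i G x + cnt L G x) := by
  apply pair_le i
  intro x
  have n0 := fun (M : List ((Fin n → Bool) → Bool)) K => cnt_nonneg M K (Function.update x i false)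
  have n1 := fun (M : List ((Fin n → Bool) → Bool)) K => cnt_nonneg M K (Function.update x i true)
  cases h0 : G (Function.update x i false) <;> cases h1 : G (Function.update x i true)
  · have key : cnt (L.map (srt i)) (srt i G) (Function.update x i true) +
        cnt (L.map (srt i)) (srt i G) (Function.update x i false) =
        cnt L G (Function.update x i false) + cnt L G (Function.update x i true) ∧
        cnt (L.map (srt i)) (srt i G) (Function.update x i false) ≤
          cnt L G (Function.update x i false) ∧
        cnt (L.map (srt i)) (srt i G) (Function.update x i false) ≤
          cnt L G (Function.update x i true) := by
      induction L with
      | nil => simp [cnt]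
      | cons H L ih =>
        obtain ⟨i1, i2, i3⟩ := ih
        simp only [List.map_cons, cnt_cons, srt_false, srt_true, h0, h1]
        cases H (Function.update x i false) <;> cases H (Function.update x i true) <;>
          simp only [nq, Bool.and_true, Bool.and_false, Bool.or_true, Bool.or_false] <;>
          refine ⟨?_, ?_, ?_⟩ <;> linarith
    obtain ⟨k1, k2, k3⟩ := key
    simp only [vi, srt_false, srt_true, h0, h1, Bool.and_self, Bool.or_self, nq, mul_zero, zero_add]
    have := sqrt_conc _ _ _ _ (n0 _ _) k1 k2 k3
    linarith
  · have key : cnt (L.map (srt i)) (srt i G) (Function.update x i false) ≤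
          cnt L G (Function.update x i false) ∧
        cnt (L.map (srt i)) (srt i G) (Function.update x i true) ≤
          cnt L G (Function.update x i true) := by
      induction L with
      | nil => simp [cnt]
      | cons H L ih =>
        obtain ⟨i2, i3⟩ := ih
        simp only [List.map_cons, cnt_cons, srt_false, srt_true, h0, h1]
        cases H (Function.update x i false) <;> cases H (Function.update x i true) <;>
          simp only [nq, Bool.and_true, Bool.and_false, Bool.or_true, Bool.or_false] <;>
          refine ⟨?_, ?_⟩ <;> linarith
    obtain ⟨k2, k3⟩ := key
    gcongr
  · have key : cnt (L.map (srt i)) (srt i G) (Function.update x i false) ≤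
          cnt L G (Function.update x i true) ∧
        cnt (L.map (srt i)) (srt i G) (Function.update x i true) ≤
          cnt L G (Function.update x i false) := by
      induction L with
      | nil => simp [cnt]
      | cons H L ih =>
        obtain ⟨i2, i3⟩ := ih
        simp only [List.map_cons, cnt_cons, srt_false, srt_true, h0, h1]
        cases H (Function.update x i false) <;> cases H (Function.update x i true) <;>
          simp only [nq, Bool.and_true, Bool.and_false, Bool.or_true, Bool.or_false] <;>
          refine ⟨?_, ?_⟩ <;> linarith
    obtain ⟨k2, k3⟩ := key
    have hv : vi i G (Function.update x i false) = vi i G (Function.update x i true) := by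
      simp [vi, srt_false, srt_true, h0, h1, nq]
    rw [hv, add_comm (Real.sqrt _)]
    gcongr
  · have key : cnt (L.map (srt i)) (srt i G) (Function.update x i false) +
        cnt (L.map (srt i)) (srt i G) (Function.update x i true) =
        cnt L G (Function.update x i false) + cnt L G (Function.update x i true) ∧
        cnt (L.map (srt i)) (srt i G) (Function.update x i true) ≤
          cnt L G (Function.update x i false) ∧
        cnt (L.map (srt i)) (srt i G) (Function.update x i true) ≤
          cnt L G (Function.update x i true) := by
      induction L with
      | nil => simp [cnt]
      | cons H L ih =>
        obtain ⟨i1, i2, i3⟩ := ih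
        simp only [List.map_cons, cnt_cons, srt_false, srt_true, h0, h1]
        cases H (Function.update x i false) <;> cases H (Function.update x i true) <;>
          simp only [nq, Bool.and_true, Bool.and_false, Bool.or_true, Bool.or_false] <;>
          refine ⟨?_, ?_, ?_⟩ <;> linarith
    obtain ⟨k1, k2, k3⟩ := key
    simp only [vi, srt_false, srt_true, h0, h1, Bool.and_self, Bool.or_self, nq, mul_zero, zero_add]
    exact sqrt_conc _ _ _ _ (n1 _ _) k1 k2 k3

/-- number of letters of `W` violated at `x` -/
def vcnt (W : List (Fin n)) (G : (Fin n → Bool) → Bool) (x : Fin n → Bool) : ℝ :=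
  (W.map (fun j => vi j G x)).sum

lemma vcnt_cons (i : Fin n) (W : List (Fin n)) (G : (Fin n → Bool) → Bool) (x : Fin n → Bool) :
    vcnt (i :: W) G x = vi i G x + vcnt W G x := by simp [vcnt]

lemma vcnt_eq_cnt (W : List (Fin n)) (G : (Fin n → Bool) → Bool) (x : Fin n → Bool) :
    vcnt W G x = cnt (W.map (fun j => srt j G)) G x := by
  simp [vcnt, cnt, vi, Function.comp_def]

lemma vcnt_nonneg (W : List (Fin n)) (G : (Fin n → Bool) → Bool) (x : Fin n → Bool) :
    0 ≤ vcnt W G x := by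
  rw [vcnt_eq_cnt]; exact cnt_nonneg _ _ _

lemma vcnt_srt_le (i : Fin n) (W : List (Fin n)) (G : (Fin n → Bool) → Bool) (x : Fin n → Bool) :
    vcnt W (srt i G) x ≤ cnt ((W.map (fun j => srt j G)).map (srt i)) (srt i G) x := by
  induction W with
  | nil => simp [vcnt, cnt]
  | cons j W ih =>
    simp only [List.map_cons, cnt_cons, vcnt_cons]
    linarith [vi_srt_le i j G x]

lemma step (i : Fin n) (e : ℝ) (L : List ((Fin n → Bool) → Bool)) (W : List (Fin n))
    (G : (Fin n → Bool) → Bool) :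
    ∑ x, Real.sqrt (e * vi i G x + cnt (L.map (srt i)) (srt i G) x + vcnt W (srt i G) x) ≤
      ∑ x, Real.sqrt (e * vi i G x + cnt L G x + vcnt W G x) := by
  have := one_step i e (L ++ W.map (fun j => srt j G)) G
  simp only [List.map_append, cnt_append] at this
  refine le_trans (Finset.sum_le_sum fun x _ => Real.sqrt_le_sqrt ?_) (this.trans (le_of_eq ?_))
  · linarith [vcnt_srt_le i W G x]
  · simp only [vcnt_eq_cnt, add_assoc]

/-- apply the sorts of `W` selected by `s` -/
def pick : List (Fin n) → List Bool → ((Fin n → Bool) → Bool) → ((Fin n → Bool) → Bool)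
  | i :: W, b :: s, f => pick W s (bif b then srt i f else f)
  | _, _, f => f

lemma pick_nil (s : List Bool) (f : (Fin n → Bool) → Bool) : pick [] s f = f := by
  simp [pick]

lemma potential : ∀ (W : List (Fin n)) (s : List Bool) (G : (Fin n → Bool) → Bool)
    (L : List ((Fin n → Bool) → Bool)),
    ∑ x, Real.sqrt (cnt (L.map (pick W s)) (pick W s G) x + sens s (fun t => pick W t G x)) ≤
      ∑ x, Real.sqrt (cnt L G x + vcnt W G x)
  | [], s, G, L => by
    have h : (pick [] s : ((Fin n → Bool) → Bool) → _) = id := by funext f; simp [pick_nil]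
    simp [h, pick_nil, sens_const, vcnt]
  | i :: W, [], G, L => by
    have h : (pick (i :: W) [] : ((Fin n → Bool) → Bool) → _) = id := by
      funext f; simp [pick]
    simp only [h, List.map_id, id, sens]
    gcongr with x
    exact vcnt_nonneg _ _ _
  | i :: W, false :: s, G, L => by
    have ih := potential W s G (srt i G :: L)
    simp only [List.map_cons, cnt_cons] at ih
    have h : (pick (i :: W) (false :: s) : ((Fin n → Bool) → Bool) → _) = pick W s := by
      funext f; simp [pick]
    simp only [h, sens, vcnt_cons]
    simp only [pick, cond_true, cond_false]
    refine le_trans (le_of_eq ?_) (ih.trans (le_of_eq ?_))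
    · apply Finset.sum_congr rfl; intro x _; congr 1; ring
    · apply Finset.sum_congr rfl; intro x _; rw [vi]; congr 1; ring
  | i :: W, true :: s, G, L => by
    have ih := potential W s (srt i G) (G :: L.map (srt i))
    simp only [List.map_cons, cnt_cons, List.map_map] at ih
    have h : (pick (i :: W) (true :: s) : ((Fin n → Bool) → Bool) → _) = pick W s ∘ srt i := by
      funext f; simp [pick]
    have st := step i 1 L W G
    simp only [h, sens, vcnt_cons]
    simp only [pick, cond_true, cond_false, Function.comp]
    simp only [Function.comp_def] at ih ⊢
    refine le_trans (le_of_eq ?_) (ih.trans (le_trans (le_of_eq ?_) (st.trans (le_of_eq ?_))))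
    · apply Finset.sum_congr rfl; intro x _
      rw [nq_comm (pick W s (srt i G) x)]; congr 1; ring
    · apply Finset.sum_congr rfl; intro x _
      rw [vi, nq_comm (G x)]; simp only [one_mul]
    · apply Finset.sum_congr rfl; intro x _; congr 1; ring

lemma flip_dist (W : List (Fin n)) (f : (Fin n → Bool) → Bool) (N : ℕ) :
    Ex Bool N (fun s => ∑ x, nq (pick W s f x) (pick W (s.map not) f x)) ≤
      2 * ∑ x, Real.sqrt (vcnt W f x) := by
  rw [Ex_sum]
  have h1 : ∑ x, Ex Bool N (fun s => nq (pick W s f x) (pick W (s.map not) f x)) ≤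
      ∑ x, 2 * Ex Bool N (fun s => Real.sqrt (sens s (fun t => pick W t f x))) :=
    Finset.sum_le_sum fun x _ => flip_bound N (fun s => pick W s f x)
  refine h1.trans ?_
  rw [← Finset.mul_sum, ← Ex_sum]
  gcongr
  rw [← Ex_const (α := Bool) N (∑ x, Real.sqrt (vcnt W f x))]
  apply Ex_mono
  intro s _
  have := potential W s f []
  simpa [cnt_nil] using this

/-! ### Sorting along words -/

/-- sort along the letters of a word -/
def sortw : List (Fin n) → ((Fin n → Bool) → Bool) → ((Fin n → Bool) → Bool)
  | [], f => f
  | i :: w, f => sortw w (srt i f)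

/-- subword selected by `s` -/
def sel {α : Type} : List α → List Bool → List α
  | i :: W, b :: s => bif b then i :: sel W s else sel W s
  | _, _ => []

lemma pick_eq : ∀ (W : List (Fin n)) (s : List Bool) (f : (Fin n → Bool) → Bool),
    pick W s f = sortw (sel W s) f
  | [], s, f => by simp [pick, sel, sortw]
  | i :: W, [], f => by simp [pick, sel, sortw]
  | i :: W, true :: s, f => by simp [pick, sel, sortw, pick_eq W s]
  | i :: W, false :: s, f => by simp [pick, sel, pick_eq W s]

lemma sortw_append : ∀ (u v : List (Fin n)) (f : (Fin n → Bool) → Bool),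
    sortw (u ++ v) f = sortw v (sortw u f)
  | [], v, f => rfl
  | i :: u, v, f => by simp only [List.cons_append, sortw]; exact sortw_append u v _

lemma srt_fix (i j : Fin n) (f : (Fin n → Bool) → Bool) (h : srt j f = f) :
    srt j (srt i f) = srt i f := by
  funext x
  have h1 := vi_srt_le i j f x
  rw [h, nq_self, vi] at h1
  revert h1
  cases srt j (srt i f) x <;> cases srt i f x <;> norm_num [nq]

lemma sortw_fix (j : Fin n) : ∀ (w : List (Fin n)) (f : (Fin n → Bool) → Bool),
    srt j f = f → srt j (sortw w f) = sortw w f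
  | [], _, h => h
  | i :: w, f, h => sortw_fix j w _ (srt_fix i j f h)

lemma sortw_sorted : ∀ (w : List (Fin n)) (f : (Fin n → Bool) → Bool) (j : Fin n), j ∈ w →
    srt j (sortw w f) = sortw w f
  | i :: w, f, j, h => by
    rcases List.mem_cons.1 h with h | h
    · subst h; exact sortw_fix j w _ (srt_srt j f)
    · exact sortw_sorted w _ j h

lemma sortw_id : ∀ (w : List (Fin n)) (f : (Fin n → Bool) → Bool),
    (∀ j ∈ w, srt j f = f) → sortw w f = f
  | [], _, _ => rfl
  | i :: w, f, h => by
    have hi : srt i f = f := h i (by simp)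
    simp only [sortw, hi]
    exact sortw_id w f (fun j hj => h j (by simp [hj]))

lemma sortw_idem (w : List (Fin n)) (f : (Fin n → Bool) → Bool) :
    sortw w (sortw w f) = sortw w f :=
  sortw_id w _ (fun j hj => sortw_sorted w f j hj)

/-- unnormalized Hamming distance -/
noncomputable def dd (f g : (Fin n → Bool) → Bool) : ℝ := ∑ x, nq (f x) (g x)

lemma dd_comm (f g : (Fin n → Bool) → Bool) : dd f g = dd g f := by
  simp only [dd, nq_comm]

lemma dd_tri (f g h : (Fin n → Bool) → Bool) : dd f h ≤ dd f g + dd g h := by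
  simp only [dd, ← Finset.sum_add_distrib]
  exact Finset.sum_le_sum fun x _ => nq_tri _ _ _

lemma dd_srt (i : Fin n) (f g : (Fin n → Bool) → Bool) : dd (srt i f) (srt i g) ≤ dd f g := by
  apply pair_le i
  intro x
  simp only [srt_false, srt_true]
  generalize f (Function.update x i false) = a
  generalize f (Function.update x i true) = b
  generalize g (Function.update x i false) = c
  generalize g (Function.update x i true) = d
  cases a <;> cases b <;> cases c <;> cases d <;> norm_num [nq]

lemma dd_sortw : ∀ (w : List (Fin n)) (f g : (Fin n → Bool) → Bool),
    dd (sortw w f) (sortw w g) ≤ dd f g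
  | [], _, _ => le_refl _
  | i :: w, f, g => (dd_sortw w _ _).trans (dd_srt i f g)

/-- two-word step -/
lemma dd_step (u v : List (Fin n)) (f : (Fin n → Bool) → Bool) :
    dd f (sortw (u ++ v) f) ≤ dd f (sortw u f) + 2 * dd (sortw u f) (sortw v f) := by
  rw [sortw_append]
  have h1 := dd_tri f (sortw u f) (sortw v (sortw u f))
  have h2 := dd_tri (sortw u f) (sortw v f) (sortw v (sortw u f))
  have h3 := dd_sortw v (sortw v f) (sortw u f)
  rw [sortw_idem, dd_comm (sortw v f) (sortw u f)] at h3
  linarith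

/-- the (unnormalized) Talagrand functional -/
noncomputable def TT (f : (Fin n → Bool) → Bool) : ℝ := ∑ x, Real.sqrt (∑ i, vi i f x)

lemma TT_nonneg (f : (Fin n → Bool) → Bool) : 0 ≤ TT f :=
  Finset.sum_nonneg fun _ _ => Real.sqrt_nonneg _

lemma Ex_vcnt [NeZero n] (f : (Fin n → Bool) → Bool) (x : Fin n → Bool) (N : ℕ) :
    Ex (Fin n) N (fun W => vcnt W f x) = (N : ℝ) / n * ∑ i, vi i f x := by
  have hn : (n : ℝ) ≠ 0 := by exact_mod_cast NeZero.ne n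
  induction N with
  | zero => simp [Ex, vcnt]
  | succ N ih =>
    simp only [Ex, vcnt_cons, Ex_add, Ex_const, ih, Finset.sum_add_distrib, Finset.sum_const,
      Finset.card_univ, Fintype.card_fin, nsmul_eq_mul]
    push_cast
    field_simp
    ring

lemma Ex_sqrt_vcnt [NeZero n] (f : (Fin n → Bool) → Bool) (N : ℕ) :
    Ex (Fin n) N (fun W => ∑ x, Real.sqrt (vcnt W f x)) ≤ Real.sqrt ((N : ℝ) / n) * TT f := by
  rw [Ex_sum, TT, Finset.mul_sum]
  apply Finset.sum_le_sum
  intro x _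
  rw [← Real.sqrt_mul (by positivity), ← Ex_vcnt]
  exact Ex_sqrt N _ (fun l => vcnt_nonneg _ _ _)

lemma Ex_sel {α : Type} [Fintype α] : ∀ (s : List Bool) (G : List α → List α → ℝ),
    Ex α s.length (fun W => G (sel W s) (sel W (s.map not))) =
      Ex α (s.count true) (fun u => Ex α (s.count false) (fun v => G u v))
  | [], G => by simp [Ex, sel]
  | true :: s, G => by
    simp only [List.length_cons, Ex, List.map_cons, sel, Bool.not_true, cond_true, cond_false]
    simp only [List.count_cons_self, List.count_cons_of_ne (show true ≠ false by decide), Ex]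
    congr 1
    apply Finset.sum_congr rfl
    intro a _
    exact Ex_sel s (fun u v => G (a :: u) v)
  | false :: s, G => by
    simp only [List.length_cons, Ex, List.map_cons, sel, Bool.not_false, cond_true, cond_false]
    simp only [List.count_cons_self, List.count_cons_of_ne (show false ≠ true by decide), Ex]
    simp only [div_eq_inv_mul]
    rw [Ex_mul, Ex_sum]
    congr 1
    apply Finset.sum_congr rfl
    intro a _
    exact Ex_sel s (fun u v => G u (a :: v))

lemma count_tf (s : List Bool) : s.count true + s.count false = s.length := by
  induction s with
  | nil => rfl
  | cons b s ih => cases b <;> simp <;> omega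

lemma Ex_count (N : ℕ) : Ex Bool N (fun s => (s.count true : ℝ)) = N / 2 := by
  induction N with
  | zero => simp [Ex]
  | succ N ih =>
    simp only [Ex, Fintype.sum_bool, Fintype.card_bool, List.count_cons_self,
      List.count_cons_of_ne (show false ≠ true by decide)]
    push_cast
    rw [Ex_add, Ex_const, ih]
    ring

/-- expected distance moved by a random word of length `N` -/
noncomputable def DD (f : (Fin n → Bool) → Bool) (N : ℕ) : ℝ :=
  Ex (Fin n) N (fun w => dd f (sortw w f))

lemma DD_rec [NeZero n] (f : (Fin n → Bool) → Bool) (N : ℕ) :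
    DD f N ≤ Ex Bool N (fun s => DD f (s.count true)) + 4 * (Real.sqrt ((N : ℝ) / n) * TT f) := by
  have h1 : ∀ s : List Bool, s.length = N → DD f N ≤ DD f (s.count true) +
      2 * Ex (Fin n) N (fun W => dd (pick W s f) (pick W (s.map not) f)) := by
    intro s hs
    have e1 : DD f N = Ex (Fin n) N (fun W => dd f (sortw (sel W s ++ sel W (s.map not)) f)) := by
      rw [← hs, Ex_sel s (fun u v => dd f (sortw (u ++ v) f)), ← Ex_append _ _ (fun w => dd f (sortw w f)), count_tf, DD]
    have e2 : DD f (s.count true) = Ex (Fin n) N (fun W => dd f (sortw (sel W s) f)) := by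
      rw [← hs, Ex_sel s (fun u v => dd f (sortw u f))]
      simp only [Ex_const, DD]
    rw [e1, e2, ← Ex_mul, ← Ex_add]
    apply Ex_mono
    intro W _
    rw [pick_eq, pick_eq]
    exact dd_step _ _ _
  have h2 := Ex_mono N (fun _ => DD f N) _ h1
  rw [Ex_const, Ex_add, Ex_mul, Ex_comm] at h2
  have h3 : Ex (Fin n) N (fun W => Ex Bool N (fun s => dd (pick W s f) (pick W (s.map not) f))) ≤
      Ex (Fin n) N (fun W => 2 * ∑ x, Real.sqrt (vcnt W f x)) :=
    Ex_mono N _ _ (fun W _ => flip_dist W f N)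
  rw [Ex_mul] at h3
  have h4 := Ex_sqrt_vcnt f N
  linarith

lemma sqrt_half_le : Real.sqrt (1 / 2) ≤ 3 / 4 := by
  rw [Real.sqrt_le_left (by norm_num)]; norm_num

lemma DD_bound [NeZero n] (f : (Fin n → Bool) → Bool) : DD f n ≤ 16 * TT f := by
  have hn : 0 < n := Nat.pos_of_ne_zero (NeZero.ne n)
  have hT := TT_nonneg f
  obtain ⟨M, hM, hmax⟩ := Finset.exists_max_image (Finset.Icc 1 n)
    (fun N => DD f N / Real.sqrt N) ⟨1, by simp; omega⟩
  rw [Finset.mem_Icc] at hM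
  set K := DD f M / Real.sqrt M with hK
  have hMpos : (0 : ℝ) < Real.sqrt M := Real.sqrt_pos.2 (by exact_mod_cast hM.1)
  have hK0 : 0 ≤ K := div_nonneg (Ex_nonneg _ _ fun w =>
    Finset.sum_nonneg fun _ _ => nq_nonneg _ _) hMpos.le
  have hle : ∀ a : ℕ, a ≤ n → DD f a ≤ K * Real.sqrt a := by
    intro a ha
    rcases Nat.eq_zero_or_pos a with h | h
    · subst h
      simp [DD, Ex, sortw, dd, nq_self]
    · have := hmax a (Finset.mem_Icc.2 ⟨h, ha⟩)
      rwa [div_le_iff₀ (Real.sqrt_pos.2 (by exact_mod_cast h))] at this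
  have h1 := DD_rec f M
  have h2 : Ex Bool M (fun s => DD f (s.count true)) ≤ K * (Real.sqrt M * Real.sqrt (1 / 2)) := by
    have e1 : Ex Bool M (fun s => DD f (s.count true)) ≤
        Ex Bool M (fun s => K * Real.sqrt (s.count true)) := by
      apply Ex_mono
      intro s hs
      apply hle
      have := count_tf s
      omega
    have e2 := Ex_sqrt M (fun s : List Bool => (s.count true : ℝ)) (fun l => by positivity)
    rw [Ex_count] at e2
    rw [Ex_mul] at e1
    rw [← Real.sqrt_mul (by positivity), show (M : ℝ) * (1 / 2) = M / 2 by ring]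
    exact e1.trans (mul_le_mul_of_nonneg_left e2 hK0)
  have h3 : DD f M = K * Real.sqrt M := by rw [hK]; field_simp
  have hnpos : (0 : ℝ) < Real.sqrt n := Real.sqrt_pos.2 (by exact_mod_cast hn)
  rw [h3, Real.sqrt_div (by positivity)] at h1
  have h4 : K ≤ K * (3 / 4) + 4 * TT f / Real.sqrt n := by
    have e : K * Real.sqrt M ≤ (K * (3 / 4) + 4 * TT f / Real.sqrt n) * Real.sqrt M := by
      have e3 : K * (Real.sqrt M * Real.sqrt (1 / 2)) ≤ K * (Real.sqrt M * (3 / 4)) := by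
        have := sqrt_half_le
        gcongr
      calc _ ≤ _ := h1
        _ ≤ K * (Real.sqrt M * (3 / 4)) + 4 * (Real.sqrt M / Real.sqrt n * TT f) := by linarith
        _ = _ := by ring
    exact le_of_mul_le_mul_right e hMpos
  have h5 : K ≤ 16 * TT f / Real.sqrt n := by
    have : 16 * TT f / Real.sqrt n = 4 * (4 * TT f / Real.sqrt n) := by ring
    linarith
  calc DD f n ≤ K * Real.sqrt n := hle n le_rfl
    _ ≤ 16 * TT f / Real.sqrt n * Real.sqrt n := by gcongr
    _ = 16 * TT f := by field_simp

/-! ### Decay of the functional -/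

lemma vcnt_sortw (V : List (Fin n)) : ∀ (w : List (Fin n)) (f : (Fin n → Bool) → Bool),
    ∑ x, Real.sqrt (vcnt V (sortw w f) x) ≤ ∑ x, Real.sqrt (vcnt V f x)
  | [], _ => le_refl _
  | i :: w, f => by
    refine (vcnt_sortw V w (srt i f)).trans ?_
    have := step i 0 [] V f
    simpa [cnt_nil] using this

/-- weight of `i` not occurring in `w` -/
noncomputable def mis (i : Fin n) (w : List (Fin n)) : ℝ := if i ∈ w then 0 else 1

lemma mis_nonneg (i : Fin n) (w : List (Fin n)) : 0 ≤ mis i w := by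
  unfold mis; split_ifs <;> norm_num

lemma TT_sortw (w : List (Fin n)) (f : (Fin n → Bool) → Bool) :
    TT (sortw w f) ≤ ∑ x, Real.sqrt (∑ i, mis i w * vi i f x) := by
  have hl : ∀ (g : (Fin n → Bool) → Bool) x,
      vcnt ((univ.filter fun i : Fin n => i ∉ w).toList) g x = ∑ i, mis i w * vi i g x := by
    intro g x
    rw [vcnt, Finset.sum_map_toList, Finset.sum_filter]
    apply Finset.sum_congr rfl
    intro i _
    by_cases h : i ∈ w <;> simp [mis, h]
  have h := vcnt_sortw ((univ.filter fun i : Fin n => i ∉ w).toList) w f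
  simp only [hl] at h
  refine le_trans (le_of_eq ?_) h
  rw [TT]
  apply Finset.sum_congr rfl
  intro x _
  congr 1
  apply Finset.sum_congr rfl
  intro i _
  by_cases hi : i ∈ w
  · simp [vi, sortw_sorted w f i hi, nq_self]
  · simp [mis, hi]

lemma Ex_mis [NeZero n] (i : Fin n) (N : ℕ) :
    Ex (Fin n) N (mis i) = (1 - 1 / (n : ℝ)) ^ N := by
  have hn : (n : ℝ) ≠ 0 := by exact_mod_cast NeZero.ne n
  induction N with
  | zero => simp [Ex, mis]
  | succ N ih =>
    have h : ∀ a : Fin n, Ex (Fin n) N (fun l => mis i (a :: l)) =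
        (if a = i then 0 else 1) * (1 - 1 / (n : ℝ)) ^ N := by
      intro a
      rw [← ih, ← Ex_mul]
      apply Ex_congr
      intro l _
      by_cases h1 : a = i
      · subst h1; simp [mis]
      · have h2 : i ≠ a := fun h => h1 h.symm
        simp [mis, h1, h2]
    simp only [Ex, h, ← Finset.sum_mul, Fintype.card_fin]
    have : ∑ a : Fin n, (if a = i then (0 : ℝ) else 1) = n - 1 := by
      have e : ∀ a : Fin n, (if a = i then (0 : ℝ) else 1) = 1 - (if a = i then 1 else 0) := by
        intro a; split_ifs <;> norm_num
      simp [e]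
    rw [this, pow_succ]
    field_simp

lemma Ex_TT [NeZero n] (f : (Fin n → Bool) → Bool) :
    Ex (Fin n) n (fun w => TT (sortw w f)) ≤ 3 / 4 * TT f := by
  have hn : 0 < n := Nat.pos_of_ne_zero (NeZero.ne n)
  have hn1 : (1 : ℝ) ≤ n := by exact_mod_cast hn
  have hp : (1 - 1 / (n : ℝ)) ^ n ≤ 1 / 2 := by
    have h1 : 1 - 1 / (n : ℝ) ≤ Real.exp (-(1 / (n : ℝ))) := by
      have := Real.add_one_le_exp (-(1 / (n : ℝ)))
      linarith
    have h0 : 0 ≤ 1 - 1 / (n : ℝ) := by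
      rw [sub_nonneg, div_le_one (by linarith)]; exact hn1
    calc (1 - 1 / (n : ℝ)) ^ n ≤ (Real.exp (-(1 / (n : ℝ)))) ^ n := by gcongr
      _ = Real.exp (-1) := by
        rw [← Real.exp_nat_mul]; congr 1; field_simp
      _ ≤ 1 / 2 := by
        rw [Real.exp_neg, inv_le_comm₀ (Real.exp_pos _) (by norm_num)]
        have := Real.add_one_le_exp (1 : ℝ)
        norm_num at this ⊢
        linarith
  refine (Ex_mono n _ _ fun w _ => TT_sortw w f).trans ?_
  rw [Ex_sum, TT, Finset.mul_sum]
  apply Finset.sum_le_sum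
  intro x _
  have hs : 0 ≤ ∑ i, vi i f x := Finset.sum_nonneg fun i _ => vi_nonneg _ _ _
  refine (Ex_sqrt n _ fun w => Finset.sum_nonneg fun i _ =>
    mul_nonneg (mis_nonneg _ _) (vi_nonneg _ _ _)).trans ?_
  have e : Ex (Fin n) n (fun w => ∑ i, mis i w * vi i f x) ≤ 1 / 2 * ∑ i, vi i f x := by
    rw [Ex_sum, Finset.mul_sum]
    apply Finset.sum_le_sum
    intro i _
    simp only [mul_comm (mis i _)]
    rw [Ex_mul, Ex_mis, mul_comm]
    exact mul_le_mul_of_nonneg_right hp (vi_nonneg _ _ _)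
  refine (Real.sqrt_le_sqrt e).trans ?_
  rw [Real.sqrt_mul (by norm_num)]
  exact mul_le_mul_of_nonneg_right sqrt_half_le (Real.sqrt_nonneg _)

/-! ### Connection with the frozen definitions -/

lemma vi_eq (i : Fin n) (f : (Fin n → Bool) → Bool) (x : Fin n → Bool) :
    vi i f x = if decEdge f x i then 1 else 0 := by
  rw [vi, decEdge]
  rcases upd_cases i x with h | h <;> rw [h] <;>
    simp only [srt_false, srt_true, Function.update_idem] <;>
    cases f (Function.update x i false) <;> cases f (Function.update x i true) <;> simp [nq]

lemma Iminus_eq (f : (Fin n → Bool) → Bool) (x : Fin n → Bool) :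
    (Iminus f x : ℝ) = ∑ i, vi i f x := by
  simp only [vi_eq, Iminus, Finset.sum_boole]

lemma dd_eq (f g : (Fin n → Bool) → Bool) :
    ((univ.filter fun x => f x ≠ g x).card : ℝ) = dd f g := by
  rw [dd, ← Finset.sum_boole]
  apply Finset.sum_congr rfl
  intro x _
  cases f x <;> cases g x <;> simp [nq]

lemma distMono_le (f g : (Fin n → Bool) → Bool) (hg : monoB g) :
    distMono f ≤ dd f g / 2 ^ n := by
  apply csInf_le
  · refine ⟨0, ?_⟩
    rintro d ⟨g, _, rfl⟩
    positivity
  · exact ⟨g, hg, by rw [dd_eq]⟩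

lemma le_distMono (f : (Fin n → Bool) → Bool) (c : ℝ)
    (h : ∀ g, monoB g → c ≤ dd f g / 2 ^ n) : c ≤ distMono f := by
  apply le_csInf
  · exact ⟨_, fun _ => true, fun _ _ _ => le_refl _, rfl⟩
  · rintro d ⟨g, hg, rfl⟩
    rw [dd_eq]
    exact h g hg

lemma distMono_tri (f g : (Fin n → Bool) → Bool) :
    distMono f ≤ dd f g / 2 ^ n + distMono g := by
  have : distMono f - dd f g / 2 ^ n ≤ distMono g := by
    apply le_distMono
    intro h hh
    have h1 := distMono_le f h hh
    have h2 : dd f h / 2 ^ n ≤ (dd f g + dd g h) / 2 ^ n := by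
      gcongr; exact dd_tri f g h
    rw [add_div] at h2
    linarith
  linarith

lemma mono_of_TT (f : (Fin n → Bool) → Bool) (h : TT f = 0) : monoB f := by
  have hv : ∀ x i, vi i f x = 0 := by
    intro x i
    have h1 := (Finset.sum_eq_zero_iff_of_nonneg
      (fun x _ => Real.sqrt_nonneg (∑ i, vi i f x))).1 h x (mem_univ x)
    rw [Real.sqrt_eq_zero (Finset.sum_nonneg fun i _ => vi_nonneg i f x)] at h1
    exact (Finset.sum_eq_zero_iff_of_nonneg (fun i _ => vi_nonneg i f x)).1 h1 i (mem_univ i)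
  have hedge : ∀ x i, f (Function.update x i false) ≤ f (Function.update x i true) := by
    intro x i
    have h1 := hv x i
    rw [vi_eq] at h1
    by_contra hc
    rw [if_pos] at h1
    · norm_num at h1
    · revert hc
      rw [decEdge]
      cases f (Function.update x i false) <;> cases f (Function.update x i true) <;> simp
  have hstep : ∀ (x : Fin n → Bool) i b, x i ≤ b → f x ≤ f (Function.update x i b) := by
    intro x i b hb
    cases hx : x i
    · have e : Function.update x i false = x := by rw [← hx]; simp
      cases b
      · rw [e]
      · have := hedge x i
        rwa [e] at this
    · have e : Function.update x i true = x := by rw [← hx]; simp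
      cases b
      · rw [hx] at hb; exact absurd hb (by decide)
      · rw [e]
  intro x y hxy
  have key : ∀ s : Finset (Fin n), f x ≤ f (s.piecewise y x) := by
    intro s
    induction s using Finset.induction_on with
    | empty => simp
    | insert i s hi ih =>
      rw [Finset.piecewise_insert]
      refine ih.trans (hstep _ _ _ ?_)
      rw [Finset.piecewise_eq_of_notMem _ _ _ hi]
      exact hxy i
  have := key univ
  simpa using this

lemma main_bound [NeZero n] (f : (Fin n → Bool) → Bool) : distMono f ≤ 64 * (TT f / 2 ^ n) := by
  have hzero : ∀ g : (Fin n → Bool) → Bool, TT g = 0 → distMono g ≤ 0 := by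
    intro g hg
    have := distMono_le g g (mono_of_TT g hg)
    simpa [dd, nq_self] using this
  obtain ⟨g, -, hmax⟩ := Finset.exists_max_image (univ : Finset ((Fin n → Bool) → Bool))
    (fun g => distMono g / TT g) ⟨f, mem_univ f⟩
  set R := distMono g / TT g with hR
  have hle : ∀ h : (Fin n → Bool) → Bool, distMono h ≤ R * TT h := by
    intro h
    rcases (TT_nonneg h).eq_or_lt with h0 | h0
    · rw [← h0, mul_zero]; exact hzero h h0.symm
    · have := hmax h (mem_univ h)
      rwa [div_le_iff₀ h0] at this
  rcases (TT_nonneg f).eq_or_lt with hf | hf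
  · rw [← hf]; simpa using hzero f hf.symm
  have hR0 : 0 ≤ R := by
    have h1 : 0 ≤ distMono f / TT f := by
      refine div_nonneg (le_distMono f 0 fun g _ => ?_) hf.le
      exact div_nonneg (Finset.sum_nonneg fun _ _ => nq_nonneg _ _) (by positivity)
    exact h1.trans (hmax f (mem_univ f))
  have hRb : R ≤ 64 / 2 ^ n := by
    rcases (TT_nonneg g).eq_or_lt with hg | hg
    · rw [hR, ← hg, div_zero]; positivity
    have h1 : distMono g ≤ DD g n / 2 ^ n + R * (3 / 4 * TT g) := by
      have e1 : distMono g ≤ Ex (Fin n) n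
          (fun w => (1 / 2 ^ n) * dd g (sortw w g) + R * TT (sortw w g)) := by
        rw [← Ex_const (α := Fin n) n (distMono g)]
        apply Ex_mono
        intro w _
        have a1 := distMono_tri g (sortw w g)
        have a2 := hle (sortw w g)
        have a3 : (1 / 2 ^ n) * dd g (sortw w g) = dd g (sortw w g) / 2 ^ n := by ring
        linarith
      rw [Ex_add, Ex_mul, Ex_mul] at e1
      have e2 := mul_le_mul_of_nonneg_left (Ex_TT g) hR0
      have e3 : (1 / 2 ^ n) * DD g n = DD g n / 2 ^ n := by ring
      rw [DD] at e3
      rw [DD]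
      linarith
    have h2 : DD g n / 2 ^ n ≤ 16 * TT g / 2 ^ n := by
      gcongr; exact DD_bound g
    have h3 : distMono g = R * TT g := by rw [hR]; field_simp
    rw [h3] at h1
    have h4 : R * TT g ≤ (64 / 2 ^ n) * TT g := by
      have : (64 / 2 ^ n) * TT g = 4 * (16 * TT g / 2 ^ n) := by ring
      linarith
    exact le_of_mul_le_mul_right h4 hg
  calc distMono f ≤ R * TT f := hle f
    _ ≤ (64 / 2 ^ n) * TT f := by gcongr
    _ = _ := by ring

/-- there is a universal constant `c > 0` such that whenever
`f` is `ε`-far from monotone, `(1/2^n)·Σ_x √(I_f⁻(x)) ≥ c·ε`. -/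
theorem stmt5 : ∃ c : ℝ, 0 < c ∧ ∀ n : ℕ, 1 ≤ n → ∀ ε : ℝ, 0 < ε →
    ∀ f : (Fin n → Bool) → Bool, ε ≤ distMono f →
    c * ε ≤ (1 / 2 ^ n) * ∑ x : Fin n → Bool, Real.sqrt (Iminus f x) := by
  refine ⟨1 / 64, by norm_num, ?_⟩
  intro n hn ε _ f hf
  have : NeZero n := ⟨by omega⟩
  have h := main_bound f
  have e : (1 / 2 ^ n) * ∑ x : Fin n → Bool, Real.sqrt (Iminus f x) = TT f / 2 ^ n := by
    simp only [Iminus_eq, TT]; ring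
  rw [e]
  linarith
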